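/- arXiv:1602.00768 — 2 statements merged into one kernel-verified Lean document; each statement's English description precedes it below -/
import Mathlib

section
/- Fix 1 ≤ k ≤ m+2n−1. Let A be the set of pairs ((V_i)_{i ∈ {0,…,m+2n}\{k}}, x) where x ∈ S_n and (V_i) is a partial flag in ℂ^{m+2n} (dim V_i = i, V_0 = 0, V_{m+2n} = ℂ^{m+2n}, V_i ⊆ V_j for i ≤ j) with x V_{k+1} ⊆ V_{k−1} and x V_i ⊆ V_{i−1} for all i ∉ {k, k+1}, i ≥ 1; every such x has dim ker x = 2, so Φ(x) := γ ∘ x ∘ (γ|_{im x})^{−1} is defined. Let B be the set of pairs ((W_j)_{j=0,…,m+2n−2}, y) where y ∈ S_{n−1} and (W_j) is a complete flag in ℂ^{m+2n−2} (dim W_j = j, W_0 = 0, W_{m+2n−2} = ℂ^{m+2n−2}) with y W_j ⊆ W_{j−1} for all j ≥ 1. Then the map α sending ((V_i), x) to ((W_j), Φ(x)), where W_j = γ(V_j) for 0 ≤ j ≤ k−1 and W_j = γ(x V_{j+2}) for k−1 ≤ j ≤ m+2n−2, is a well-defined bijection from A onto B. (Proposition 2.3 of the paper: the set-theoretic isomorphism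 S_{n+1} ×_{sl} T*P_{k,n+1} ≅ S_n ×_{sl} T*B_n, stated here with indices (n, n−1).) -/
/-!
Every `x ∈ S_n` has the same composite `τ = γ ∘ x = γ ∘ z_n`, which is onto and has a
two-dimensional kernel. If `dim ker x = 2` then `ker x = ker τ`, so `x = σ ∘ τ` for a section `σ`
of `γ`, and then `Φ(x) = τ ∘ σ`. The rows of `σ` that are not prescribed by `γ ∘ σ = id` are the
rows `m + n` and `m + 2n`; apart from the last one when `n = 1`, which vanishes, they are among the
rows of `τ ∘ σ`. Hence `σ` is determined by `τ ∘ σ`, and `τ ∘ σ` runs through all of `S_{n-1}`.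

For the flags, counting dimensions in `x V_{k+1} ⊆ V_{k-1}` forces `dim ker x = 2`,
`ker x ⊆ V_{k+1}` and `x V_{k+1} = V_{k-1}`. So `V_i ⊆ im σ` for `i < k` and `ker τ ⊆ V_i` for
`i > k`, and `(V_i)` is recovered from `(W_j)` as `V_i = σ W_i` for `i < k` and
`V_i = τ⁻¹ W_{i-2}` for `i > k`.
-/

open Module BigOperators

noncomputable section

/-- The `k`-th standard basis vector `u_k` of `ℂ^(m+2n)`, indexed `1`-based;
it is zero if `k` is out of the range `1, …, m+2n`. -/
def stdVec (m n : ℕ) (k : ℕ) : Fin (m + 2*n) → ℂ := fun i => if (i : ℕ) + 1 = k then 1 else 0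

/-- The matrix of the two-block nilpotent `z_n` of Jordan type `(m+n, n)`:
`z_n u_i = u_{i-1}` for `2 ≤ i ≤ m+n` and for `m+n+2 ≤ i ≤ m+2n`, and
`z_n u_1 = z_n u_{m+n+1} = 0`. -/
def zMat (m n : ℕ) : Matrix (Fin (m + 2*n)) (Fin (m + 2*n)) ℂ :=
  fun i j => if (j : ℕ) = (i : ℕ) + 1 ∧ (j : ℕ) ≠ m + n then 1 else 0

/-- The two-block nilpotent `z_n` as an endomorphism of `ℂ^(m+2n)`. -/
def zn (m n : ℕ) : Module.End ℂ (Fin (m + 2*n) → ℂ) := Matrix.toLin' (zMat m n)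

/-- The enlarged slice `S_n' ⊆ End(ℂ^(m+2n))`: the endomorphisms whose matrix agrees
with that of `z_n` outside rows `m+n` and `m+2n`, i.e. `x u_j - z_n u_j` lies in
`span{u_{m+n}, u_{m+2n}}` for every `j`. -/
def slice' (m n : ℕ) : Set (Module.End ℂ (Fin (m + 2*n) → ℂ)) :=
  { x | ∀ j : ℕ, x (stdVec m n j) - zn m n (stdVec m n j) ∈
      Submodule.span ℂ {stdVec m n (m + n), stdVec m n (m + 2*n)} }

/-- The matrix entry `x_{p,q}` (`1`-based) of an endomorphism of `ℂ^(m+2n)`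
in the standard basis `u_1, …, u_{m+2n}`. -/
def entry (m n : ℕ) (x : Module.End ℂ (Fin (m + 2*n) → ℂ)) (p q : ℕ) : ℂ :=
  ∑ i, stdVec m n p i * x (stdVec m n q) i

/-- The Mirkovic–Vybornov slice `S_n ⊆ S_n'`: for `n ≥ 1` it consists of those
`x ∈ S_n'` whose matrix entries `x_{m+2n, j}` vanish for `n+1 ≤ j ≤ m+n`
(for `n = 0` the slices `S_0` and `S_0'` coincide, so no further condition is imposed). -/
def MVslice (m n : ℕ) : Set (Module.End ℂ (Fin (m + 2*n) → ℂ)) :=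
  { x | x ∈ slice' m n ∧
      ∀ j : ℕ, n + 1 ≤ j → j ≤ m + n → n ≠ 0 → entry m n x (m + 2*n) j = 0 }

/-- The matrix of the projection `γ : ℂ^(m+2n) → ℂ^(m+2n-2)`:
`γ u_i = u_i` for `1 ≤ i ≤ m+n-1`, `γ u_{m+n} = 0`,
`γ u_{m+n+j} = u_{m+n-1+j}` for `1 ≤ j ≤ n-1`, and `γ u_{m+2n} = 0`. -/
def gamMat (m n : ℕ) : Matrix (Fin (m + 2*(n-1))) (Fin (m + 2*n)) ℂ :=
  fun i j => if ((j : ℕ) = (i : ℕ) ∧ (j : ℕ) + 1 < m + n) ∨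
      ((j : ℕ) = (i : ℕ) + 1 ∧ m + n ≤ (j : ℕ)) then 1 else 0

/-- The linear map `γ : ℂ^(m+2n) → ℂ^(m+2n-2)`. -/
def gam (m n : ℕ) : (Fin (m + 2*n) → ℂ) →ₗ[ℂ] (Fin (m + 2*(n-1)) → ℂ) :=
  Matrix.toLin' (gamMat m n)

-- `Φ(x) := γ ∘ x ∘ (γ|_{im x})⁻¹ ∈ End(ℂ^(m+2n-2))`, defined whenever `γ` restricts
-- to a bijection from `im x` onto `ℂ^(m+2n-2)` (junk value `0` otherwise).
open Classical in
noncomputable def Phi (m n : ℕ) (x : Module.End ℂ (Fin (m + 2*n) → ℂ)) :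
    Module.End ℂ (Fin (m + 2*(n-1)) → ℂ) :=
  if h : Function.Bijective ((gam m n).domRestrict (LinearMap.range x)) then
    (gam m n) ∘ₗ x ∘ₗ (LinearMap.range x).subtype ∘ₗ
      (LinearEquiv.ofBijective ((gam m n).domRestrict (LinearMap.range x)) h).symm.toLinearMap
  else 0


/-- Index set for partial flags in `ℂ^(m+2n)` missing the `k`-th step:
`{0, …, m+2n} ∖ {k}`. -/
abbrev flagIdxA (m n k : ℕ) := {i : ℕ // i ≤ m + 2*n ∧ i ≠ k}

/-- Index set for complete flags in `ℂ^(m+2n-2)`: `{0, …, m+2n−2}`. -/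
abbrev flagIdxB (m n : ℕ) := {j : ℕ // j ≤ m + 2*n - 2}

/-- The set `A` of pairs `((V_i)_{i ∈ {0,…,m+2n}∖{k}}, x)`: `x ∈ S_n` and `(V_i)` is a
partial flag with `x V_{k+1} ⊆ V_{k−1}` and `x V_i ⊆ V_{i−1}` for the remaining
indices. -/
def SetA (m n k : ℕ) : Set ((flagIdxA m n k → Submodule ℂ (Fin (m + 2*n) → ℂ)) ×
    Module.End ℂ (Fin (m + 2*n) → ℂ)) :=
  { p | p.2 ∈ MVslice m n ∧
      (∀ i, Module.finrank ℂ (p.1 i) = i.val) ∧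
      (∀ i, i.val = 0 → p.1 i = ⊥) ∧
      (∀ i, i.val = m + 2*n → p.1 i = ⊤) ∧
      (∀ i j, i.val ≤ j.val → p.1 i ≤ p.1 j) ∧
      (∀ i j, i.val = k + 1 → j.val = k - 1 → ∀ v ∈ p.1 i, p.2 v ∈ p.1 j) ∧
      (∀ i j, i.val = j.val + 1 → ∀ v ∈ p.1 i, p.2 v ∈ p.1 j) }

/-- The set `B` of pairs `((W_j)_{j = 0,…,m+2n−2}, y)`: `y ∈ S_{n−1}` and `(W_j)` is a
complete flag in `ℂ^(m+2n−2)` with `y W_j ⊆ W_{j−1}`. -/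
def SetB (m n : ℕ) : Set ((flagIdxB m n → Submodule ℂ (Fin (m + 2*(n-1)) → ℂ)) ×
    Module.End ℂ (Fin (m + 2*(n-1)) → ℂ)) :=
  { p | p.2 ∈ MVslice m (n-1) ∧
      (∀ j, Module.finrank ℂ (p.1 j) = j.val) ∧
      (∀ j, j.val = 0 → p.1 j = ⊥) ∧
      (∀ j, j.val = m + 2*n - 2 → p.1 j = ⊤) ∧
      (∀ i j, i.val ≤ j.val → p.1 i ≤ p.1 j) ∧
      (∀ i j, i.val = j.val + 1 → ∀ v ∈ p.1 i, p.2 v ∈ p.1 j) }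

/-- The map `α` sending `((V_i), x)` to `((W_j), Φ(x))`, where `W_j = γ(V_j)` for
`j ≤ k−1` and `W_j = γ(x V_{j+2})` for `k−1 ≤ j ≤ m+2n−2`. -/
def alphaMap (m n k : ℕ) (hn : 1 ≤ n) (hk1 : 1 ≤ k)
    (p : (flagIdxA m n k → Submodule ℂ (Fin (m + 2*n) → ℂ)) ×
      Module.End ℂ (Fin (m + 2*n) → ℂ)) :
    (flagIdxB m n → Submodule ℂ (Fin (m + 2*(n-1)) → ℂ)) ×
      Module.End ℂ (Fin (m + 2*(n-1)) → ℂ) :=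
  (fun j =>
    if h : j.val ≤ k - 1 then
      (p.1 ⟨j.val, by have := j.2; omega⟩).map (gam m n)
    else
      ((p.1 ⟨j.val + 2, by have := j.2; omega⟩).map p.2).map (gam m n),
   Phi m n p.2)

section Module

variable {R E F G : Type*} [Ring R] [AddCommGroup E] [Module R E] [AddCommGroup F] [Module R F]
  [AddCommGroup G] [Module R G]

theorem finrank_map_of_injective {f : E →ₗ[R] F} (hf : Function.Injective f)
    (V : Submodule R E) : finrank R (V.map f) = finrank R V :=
  (Submodule.equivMapOfInjective f hf V).finrank_eq.symm

theorem exists_comp_eq_of_ker_le {f : E →ₗ[R] F} (hf : Function.Surjective f)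
    {g : E →ₗ[R] G} (hfg : LinearMap.ker f ≤ LinearMap.ker g) :
    ∃ h : F →ₗ[R] G, h ∘ₗ f = g :=
  ⟨(LinearMap.ker f).liftQ g hfg ∘ₗ (f.quotKerEquivOfSurjective hf).symm,
    LinearMap.ext fun v => by simp [LinearMap.quotKerEquivOfSurjective_symm_apply]⟩

theorem map_map_of_le_range {γ : E →ₗ[R] F} {σ : F →ₗ[R] E} (hγσ : γ ∘ₗ σ = LinearMap.id)
    {V : Submodule R E} (hV : V ≤ LinearMap.range σ) : (V.map γ).map σ = V := by
  obtain ⟨U, rfl⟩ : ∃ U : Submodule R F, U.map σ = V := ⟨_, Submodule.map_comap_eq_self hV⟩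
  rw [← Submodule.map_comp σ γ, hγσ, Submodule.map_id]

theorem ker_comp_of_leftInverse {σ : F →ₗ[R] G} {γ : G →ₗ[R] F}
    (hγσ : γ ∘ₗ σ = LinearMap.id) (τ : E →ₗ[R] F) : LinearMap.ker (σ ∘ₗ τ) = LinearMap.ker τ :=
  LinearMap.ker_comp_of_ker_eq_bot τ
    (LinearMap.ker_eq_bot.2 (LinearMap.injective_of_comp_eq_id _ _ hγσ))

end Module

section LinearAlgebra

variable {K E F : Type*} [DivisionRing K] [AddCommGroup E] [Module K E] [AddCommGroup F]
  [Module K F]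

theorem finrank_map_add_finrank_inf_ker [FiniteDimensional K E] (f : E →ₗ[K] F)
    (V : Submodule K E) :
    finrank K (V.map f) + finrank K (V ⊓ LinearMap.ker f : Submodule K E) = finrank K V := by
  rw [← LinearMap.range_domRestrict, ← Submodule.map_comap_subtype,
    Submodule.finrank_map_subtype_eq, ← LinearMap.ker_domRestrict]
  exact (f.domRestrict V).finrank_range_add_finrank_ker

theorem finrank_map_add_finrank_ker_of_le [FiniteDimensional K E] {f : E →ₗ[K] F}
    {V : Submodule K E} (hV : LinearMap.ker f ≤ V) :
    finrank K (V.map f) + finrank K (LinearMap.ker f) = finrank K V := by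
  rw [← finrank_map_add_finrank_inf_ker f V, inf_eq_right.2 hV]

theorem ker_le_and_map_eq_of_finrank_le [FiniteDimensional K E] [FiniteDimensional K F]
    {f : E →ₗ[K] F} {V : Submodule K E} {U : Submodule K F} (hVU : V.map f ≤ U)
    (hdim : finrank K U + finrank K (LinearMap.ker f) ≤ finrank K V) :
    LinearMap.ker f ≤ V ∧ V.map f = U := by
  have hrank := finrank_map_add_finrank_inf_ker f V
  have hmap := Submodule.finrank_mono hVU
  have hinf : finrank K (V ⊓ LinearMap.ker f : Submodule K E) ≤ finrank K (LinearMap.ker f) :=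
    Submodule.finrank_mono inf_le_right
  exact ⟨inf_eq_right.1 (Submodule.eq_of_le_of_finrank_le inf_le_right (by omega)),
    Submodule.eq_of_le_of_finrank_le hVU (by omega)⟩

end LinearAlgebra

section Flags

variable {K E F : Type*} [DivisionRing K] [AddCommGroup E] [Module K E] [AddCommGroup F]
  [Module K F] {N k : ℕ}

/-- `W` is a point of the Springer fibre of `y`: a flag of subspaces `W_0 ≤ ⋯ ≤ W_N` with
`dim W_j = j` and `y W_{j+1} ≤ W_j`. It is complete when the ambient dimension is `N`. -/
structure IsSpringerFlag (y : End K E) (W : {j : ℕ // j ≤ N} → Submodule K E) : Prop where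
  finrank_eq : ∀ j, finrank K (W j) = j
  monotone : Monotone W
  map_le : ∀ {i j}, i.val = j.val + 1 → (W i).map y ≤ W j

/-- `V` is a point of the Spaltenstein variety of `x`: a flag of subspaces `(V_i)`, `i ≤ N`,
with the `k`-th step left out, such that `dim V_i = i` and `x` maps each member into the
preceding one. -/
structure IsSpaltensteinFlag (x : End K E) (V : {i : ℕ // i ≤ N ∧ i ≠ k} → Submodule K E) :
    Prop where
  finrank_eq : ∀ i, finrank K (V i) = i
  monotone : Monotone V
  map_le : ∀ {i j}, i.val = j.val + 1 → (V i).map x ≤ V j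
  map_le_gap : ∀ {i j}, i.val = k + 1 → j.val + 1 = k → (V i).map x ≤ V j

/-- The flag `γ V_0, …, γ V_{k-1}, τ V_{k+2}, …, τ V_N` obtained from a flag `V` without
`k`-th step. -/
def collapseFlag (γ τ : E →ₗ[K] F) (hN : 2 ≤ N)
    (V : {i : ℕ // i ≤ N ∧ i ≠ k} → Submodule K E) (j : {j : ℕ // j ≤ N - 2}) :
    Submodule K F :=
  if _ : j.val < k then (V ⟨j, by omega⟩).map γ else (V ⟨j + 2, by omega⟩).map τ

/-- The flag `σ W_0, …, σ W_{k-1}, τ⁻¹ W_{k-1}, …, τ⁻¹ W_{N-2}` without `k`-th step, inverse to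
`collapseFlag γ τ` when `σ` is a section of `γ` and the flags are adapted to `σ ∘ τ`
and `τ ∘ σ`. -/
def expandFlag (σ : F →ₗ[K] E) (τ : E →ₗ[K] F) (hk : k < N)
    (W : {j : ℕ // j ≤ N - 2} → Submodule K F) (i : {i : ℕ // i ≤ N ∧ i ≠ k}) :
    Submodule K E :=
  if _ : i.val < k then (W ⟨i, by omega⟩).map σ else (W ⟨i - 2, by omega⟩).comap τ

variable {γ τ : E →ₗ[K] F} {σ : F →ₗ[K] E} {hN : 2 ≤ N} {hk : k < N}
  {V : {i : ℕ // i ≤ N ∧ i ≠ k} → Submodule K E} {W : {j : ℕ // j ≤ N - 2} → Submodule K F}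
  {i : {i : ℕ // i ≤ N ∧ i ≠ k}} {j : {j : ℕ // j ≤ N - 2}}

theorem collapseFlag_of_lt (hij : i.val = j.val) (hi : i.val < k) :
    collapseFlag γ τ hN V j = (V i).map γ := by
  rw [collapseFlag, dif_pos (hij ▸ hi)]
  congr 2
  exact Subtype.ext hij.symm

theorem expandFlag_of_lt (hij : i.val = j.val) (hi : i.val < k) :
    expandFlag σ τ hk W i = (W j).map σ := by
  rw [expandFlag, dif_pos hi]
  congr 2
  exact Subtype.ext hij

theorem expandFlag_of_gt (hij : i.val = j.val + 2) (hi : k < i.val) :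
    expandFlag σ τ hk W i = (W j).comap τ := by
  rw [expandFlag, dif_neg hi.not_gt]
  congr 2
  exact Subtype.ext (by dsimp only; omega)

theorem IsSpringerFlag.map_le_of_le [FiniteDimensional K E] {y : End K E}
    {W : {j : ℕ // j ≤ N} → Submodule K E} (hW : IsSpringerFlag y W) {i j}
    (hij : i.val ≤ j.val + 1) : (W i).map y ≤ W j := by
  rcases Nat.eq_zero_or_pos i.val with hi | hi
  · have hbot : W i = ⊥ := Submodule.finrank_eq_zero.1 (by rw [hW.finrank_eq, hi])
    simp [hbot]
  · exact (hW.map_le (j := ⟨i - 1, by omega⟩) (by dsimp only; omega)).trans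
      (hW.monotone (Subtype.mk_le_mk.2 (by omega)))

theorem IsSpaltensteinFlag.gap [FiniteDimensional K E] {x : End K E}
    (hV : IsSpaltensteinFlag x V) (hx : finrank K (LinearMap.ker x) ≤ 2) {i j}
    (hi : i.val = k + 1) (hj : j.val + 1 = k) :
    LinearMap.ker x ≤ V i ∧ (V i).map x = V j :=
  ker_le_and_map_eq_of_finrank_le (hV.map_le_gap hi hj) (by
    rw [hV.finrank_eq, hV.finrank_eq]
    omega)

theorem IsSpaltensteinFlag.finrank_ker [FiniteDimensional K E] {x : End K E}
    (hV : IsSpaltensteinFlag x V) (hx : finrank K (LinearMap.ker x) ≤ 2) (hk0 : 1 ≤ k)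
    (hk : k < N) : finrank K (LinearMap.ker x) = 2 := by
  obtain ⟨hker, hmap⟩ := hV.gap hx (i := ⟨k + 1, by omega⟩) (j := ⟨k - 1, by omega⟩) rfl
    (by dsimp only; omega)
  have hrank := finrank_map_add_finrank_ker_of_le hker
  rw [hmap, hV.finrank_eq, hV.finrank_eq] at hrank
  dsimp only at hrank
  omega

theorem IsSpaltensteinFlag.ker_le [FiniteDimensional K E] {x : End K E}
    (hV : IsSpaltensteinFlag x V) (hx : finrank K (LinearMap.ker x) ≤ 2) (hk0 : 1 ≤ k)
    (hi : k < i.val) : LinearMap.ker x ≤ V i :=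
  (hV.gap hx (i := ⟨k + 1, by omega⟩) (j := ⟨k - 1, by omega⟩) rfl (by dsimp only; omega)).1.trans
    (hV.monotone (Subtype.mk_le_mk.2 hi))

theorem IsSpaltensteinFlag.le_range [FiniteDimensional K E] {x : End K E}
    (hV : IsSpaltensteinFlag x V) (hx : finrank K (LinearMap.ker x) ≤ 2) (hk : k < N)
    (hi : i.val < k) : V i ≤ LinearMap.range x := by
  obtain ⟨-, hmap⟩ := hV.gap hx (i := ⟨k + 1, by omega⟩) (j := ⟨k - 1, by omega⟩) rfl
    (by dsimp only; omega)
  calc V i ≤ V ⟨k - 1, by omega⟩ := hV.monotone (Subtype.mk_le_mk.2 (by omega))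
    _ = (V ⟨k + 1, by omega⟩).map x := hmap.symm
    _ ≤ LinearMap.range x := LinearMap.map_le_range

theorem collapseFlag_expandFlag (hγσ : γ ∘ₗ σ = LinearMap.id) (hτ : Function.Surjective τ) :
    collapseFlag γ τ hN (expandFlag σ τ hk W) = W := by
  funext j
  rcases Nat.lt_or_ge j.val k with hj | hj
  · rw [collapseFlag_of_lt (i := ⟨j, by omega⟩) rfl hj, expandFlag_of_lt rfl hj,
      ← Submodule.map_comp, hγσ, Submodule.map_id]
  · rw [collapseFlag, dif_neg hj.not_gt, expandFlag_of_gt rfl (by dsimp only; omega),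
      Submodule.map_comap_eq_of_surjective hτ]

theorem IsSpringerFlag.monotone_expandFlag [FiniteDimensional K F]
    (hk0 : 1 ≤ k) (hW : IsSpringerFlag (τ ∘ₗ σ) W) : Monotone (expandFlag σ τ hk W) := by
  intro i j hij
  have hij' : i.val ≤ j.val := hij
  rcases lt_or_gt_of_ne i.2.2 with hi | hi <;> rcases lt_or_gt_of_ne j.2.2 with hj | hj
  · rw [expandFlag_of_lt (j := ⟨i, by omega⟩) rfl hi, expandFlag_of_lt (j := ⟨j, by omega⟩) rfl hj]
    exact Submodule.map_mono (hW.monotone hij)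
  · rw [expandFlag_of_lt (j := ⟨i, by omega⟩) rfl hi,
      expandFlag_of_gt (j := ⟨j - 2, by omega⟩) (by dsimp only; omega) hj,
      ← Submodule.map_le_iff_le_comap, ← Submodule.map_comp]
    exact hW.map_le_of_le (by dsimp only; omega)
  · omega
  · rw [expandFlag_of_gt (j := ⟨i - 2, by omega⟩) (by dsimp only; omega) hi,
      expandFlag_of_gt (j := ⟨j - 2, by omega⟩) (by dsimp only; omega) hj]
    exact Submodule.comap_mono (hW.monotone (Subtype.mk_le_mk.2 (by omega)))

variable [FiniteDimensional K E]

theorem IsSpaltensteinFlag.ker_le_of_comp (hγσ : γ ∘ₗ σ = LinearMap.id)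
    (hτ : finrank K (LinearMap.ker τ) ≤ 2) (hV : IsSpaltensteinFlag (σ ∘ₗ τ) V) (hk0 : 1 ≤ k)
    (hi : k < i.val) : LinearMap.ker τ ≤ V i := by
  rw [← ker_comp_of_leftInverse hγσ τ] at hτ ⊢
  exact hV.ker_le hτ hk0 hi

theorem IsSpaltensteinFlag.map_map_of_lt (hγσ : γ ∘ₗ σ = LinearMap.id)
    (hτ : finrank K (LinearMap.ker τ) ≤ 2) (hV : IsSpaltensteinFlag (σ ∘ₗ τ) V) (hk : k < N)
    (hi : i.val < k) : ((V i).map γ).map σ = V i := by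
  rw [← ker_comp_of_leftInverse hγσ τ] at hτ
  exact map_map_of_le_range hγσ ((hV.le_range hτ hk hi).trans (LinearMap.range_comp_le_range _ _))

/-- The case `j = k - 1` is where the two halves of the flag meet: `γ V_{k-1} = τ V_{k+1}`
because `σ τ V_{k+1} = V_{k-1}`. -/
theorem IsSpaltensteinFlag.collapseFlag_of_gt (hγσ : γ ∘ₗ σ = LinearMap.id)
    (hτ : finrank K (LinearMap.ker τ) ≤ 2) (hV : IsSpaltensteinFlag (σ ∘ₗ τ) V)
    (hij : i.val = j.val + 2) (hi : k < i.val) :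
    collapseFlag γ τ hN V j = (V i).map τ := by
  rcases Nat.lt_or_ge j.val k with hj | hj
  · rw [← ker_comp_of_leftInverse hγσ τ] at hτ
    have hmap := (hV.gap hτ (i := i) (j := ⟨j, by omega⟩) (by omega) (by dsimp only; omega)).2
    rw [collapseFlag_of_lt (i := ⟨j, by omega⟩) rfl hj, ← hmap, ← Submodule.map_comp,
      ← LinearMap.comp_assoc, hγσ, LinearMap.id_comp]
  · rw [collapseFlag, dif_neg hj.not_gt]
    congr 2
    exact Subtype.ext hij.symm

theorem IsSpaltensteinFlag.finrank_collapseFlag (hγσ : γ ∘ₗ σ = LinearMap.id)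
    (hτ : finrank K (LinearMap.ker τ) = 2) (hV : IsSpaltensteinFlag (σ ∘ₗ τ) V) (hk0 : 1 ≤ k)
    (hk : k < N) (j : {j : ℕ // j ≤ N - 2}) : finrank K (collapseFlag γ τ hN V j) = j := by
  rcases Nat.lt_or_ge j.val k with hj | hj
  · rw [collapseFlag_of_lt (i := ⟨j, by omega⟩) rfl hj,
      ← finrank_map_of_injective (LinearMap.injective_of_comp_eq_id _ _ hγσ),
      hV.map_map_of_lt hγσ hτ.le hk hj, hV.finrank_eq]
  · have hi : k < j.val + 2 := by omega
    have hrank := finrank_map_add_finrank_ker_of_le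
      (hV.ker_le_of_comp hγσ hτ.le hk0 (i := ⟨j + 2, by omega⟩) hi)
    rw [hτ, hV.finrank_eq] at hrank
    rw [hV.collapseFlag_of_gt hγσ hτ.le (i := ⟨j + 2, by omega⟩) rfl hi]
    exact Nat.add_right_cancel hrank

theorem IsSpaltensteinFlag.monotone_collapseFlag (hγσ : γ ∘ₗ σ = LinearMap.id)
    (hτ : finrank K (LinearMap.ker τ) ≤ 2) (hV : IsSpaltensteinFlag (σ ∘ₗ τ) V) (hk0 : 1 ≤ k)
    (hk : k < N) : Monotone (collapseFlag γ τ hN V) := by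
  have low {i j : {j : ℕ // j ≤ N - 2}} (hij : i ≤ j) (hj : j.val < k) :
      collapseFlag γ τ hN V i ≤ collapseFlag γ τ hN V j := by
    have hi : i.val < k := (Subtype.coe_le_coe.2 hij).trans_lt hj
    rw [collapseFlag_of_lt (i := ⟨i, by omega⟩) rfl hi,
      collapseFlag_of_lt (i := ⟨j, by omega⟩) rfl hj]
    exact Submodule.map_mono (hV.monotone hij)
  have high {i j : {j : ℕ // j ≤ N - 2}} (hij : i ≤ j) (hi : k ≤ i.val + 1) :
      collapseFlag γ τ hN V i ≤ collapseFlag γ τ hN V j := by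
    have hij' : i.val ≤ j.val := hij
    rw [hV.collapseFlag_of_gt hγσ hτ (i := ⟨i + 2, by omega⟩) rfl (by dsimp only; omega),
      hV.collapseFlag_of_gt hγσ hτ (i := ⟨j + 2, by omega⟩) rfl (by dsimp only; omega)]
    exact Submodule.map_mono (hV.monotone (Subtype.mk_le_mk.2 (by omega)))
  intro i j hij
  rcases Nat.lt_or_ge j.val k with hj | hj
  · exact low hij hj
  rcases Nat.lt_or_ge i.val k with hi | hi
  · let l : {j : ℕ // j ≤ N - 2} := ⟨k - 1, by omega⟩
    exact (low (j := l) (Subtype.mk_le_mk.2 (by omega)) (by dsimp only [l]; omega)).trans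
      (high (Subtype.mk_le_mk.2 (by omega)) (by dsimp only [l]; omega))
  · exact high hij (by omega)

theorem IsSpaltensteinFlag.map_collapseFlag_le (hγσ : γ ∘ₗ σ = LinearMap.id)
    (hτ : finrank K (LinearMap.ker τ) ≤ 2) (hV : IsSpaltensteinFlag (σ ∘ₗ τ) V)
    (hk : k < N) {i j : {j : ℕ // j ≤ N - 2}} (hij : i.val = j.val + 1) :
    (collapseFlag γ τ hN V i).map (τ ∘ₗ σ) ≤ collapseFlag γ τ hN V j := by
  rcases Nat.lt_or_ge i.val k with hi | hi
  · let i' : {i : ℕ // i ≤ N ∧ i ≠ k} := ⟨i, by omega⟩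
    let j' : {i : ℕ // i ≤ N ∧ i ≠ k} := ⟨j, by omega⟩
    rw [collapseFlag_of_lt (i := i') rfl hi,
      collapseFlag_of_lt (i := j') rfl (show j.val < k by omega)]
    calc ((V i').map γ).map (τ ∘ₗ σ) = (V i').map τ := by
          rw [Submodule.map_comp, hV.map_map_of_lt hγσ hτ hk hi]
      _ = ((V i').map (σ ∘ₗ τ)).map γ := by
          rw [← Submodule.map_comp, ← LinearMap.comp_assoc, hγσ, LinearMap.id_comp]
      _ ≤ (V j').map γ := Submodule.map_mono (hV.map_le hij)
  · let i' : {i : ℕ // i ≤ N ∧ i ≠ k} := ⟨i + 2, by omega⟩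
    let j' : {i : ℕ // i ≤ N ∧ i ≠ k} := ⟨j + 2, by omega⟩
    rw [hV.collapseFlag_of_gt hγσ hτ (i := i') rfl (by dsimp only [i']; omega),
      hV.collapseFlag_of_gt hγσ hτ (i := j') rfl (by dsimp only [j']; omega)]
    calc ((V i').map τ).map (τ ∘ₗ σ) = ((V i').map (σ ∘ₗ τ)).map τ := by
          simp only [← Submodule.map_comp, LinearMap.comp_assoc]
      _ ≤ (V j').map τ := Submodule.map_mono (hV.map_le (by dsimp only [i', j']; omega))

theorem IsSpaltensteinFlag.isSpringerFlag_collapseFlag (hγσ : γ ∘ₗ σ = LinearMap.id)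
    (hτ : finrank K (LinearMap.ker τ) = 2) (hV : IsSpaltensteinFlag (σ ∘ₗ τ) V) (hk0 : 1 ≤ k)
    (hk : k < N) : IsSpringerFlag (τ ∘ₗ σ) (collapseFlag γ τ hN V) where
  finrank_eq := hV.finrank_collapseFlag hγσ hτ hk0 hk
  monotone := hV.monotone_collapseFlag hγσ hτ.le hk0 hk
  map_le := hV.map_collapseFlag_le hγσ hτ.le hk

theorem IsSpaltensteinFlag.expandFlag_collapseFlag (hγσ : γ ∘ₗ σ = LinearMap.id)
    (hτ : finrank K (LinearMap.ker τ) ≤ 2) (hV : IsSpaltensteinFlag (σ ∘ₗ τ) V) (hk0 : 1 ≤ k) :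
    expandFlag σ τ hk (collapseFlag γ τ hN V) = V := by
  funext i
  rcases lt_or_gt_of_ne i.2.2 with hi | hi
  · rw [expandFlag_of_lt (j := ⟨i, by omega⟩) rfl hi, collapseFlag_of_lt rfl hi,
      hV.map_map_of_lt hγσ hτ hk hi]
  · have hij : i.val = i.val - 2 + 2 := by omega
    rw [expandFlag_of_gt (j := ⟨i - 2, by omega⟩) hij hi, hV.collapseFlag_of_gt hγσ hτ hij hi,
      Submodule.comap_map_eq_self (hV.ker_le_of_comp hγσ hτ hk0 hi)]

theorem IsSpringerFlag.finrank_expandFlag (hσ : Function.Injective σ)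
    (hτ : Function.Surjective τ) (hker : finrank K (LinearMap.ker τ) = 2) {y : End K F}
    (hk0 : 1 ≤ k) (hW : IsSpringerFlag y W) (i : {i : ℕ // i ≤ N ∧ i ≠ k}) :
    finrank K (expandFlag σ τ hk W i) = i := by
  rcases lt_or_gt_of_ne i.2.2 with hi | hi
  · rw [expandFlag_of_lt (j := ⟨i, by omega⟩) rfl hi, finrank_map_of_injective hσ, hW.finrank_eq]
  · rw [expandFlag_of_gt (j := ⟨i - 2, by omega⟩) (by dsimp only; omega) hi,
      ← finrank_map_add_finrank_ker_of_le (LinearMap.ker_le_comap τ),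
      Submodule.map_comap_eq_of_surjective hτ, hker, hW.finrank_eq]
    dsimp only
    omega

theorem IsSpringerFlag.isSpaltensteinFlag_expandFlag [FiniteDimensional K F]
    (hσ : Function.Injective σ) (hτ : Function.Surjective τ)
    (hker : finrank K (LinearMap.ker τ) = 2) (hk0 : 1 ≤ k) (hW : IsSpringerFlag (τ ∘ₗ σ) W) :
    IsSpaltensteinFlag (σ ∘ₗ τ) (expandFlag σ τ hk W) where
  finrank_eq := hW.finrank_expandFlag hσ hτ hker hk0
  monotone := hW.monotone_expandFlag hk0
  map_le {i j} hij := by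
    rcases lt_or_gt_of_ne i.2.2 with hi | hi
    · rw [expandFlag_of_lt (j := ⟨i, by omega⟩) rfl hi,
        expandFlag_of_lt (j := ⟨j, by omega⟩) rfl (by omega), ← Submodule.map_comp,
        LinearMap.comp_assoc, Submodule.map_comp]
      exact Submodule.map_mono (hW.map_le hij)
    · have hj : k < j.val := by omega
      rw [expandFlag_of_gt (j := ⟨i - 2, by omega⟩) (by dsimp only; omega) hi,
        expandFlag_of_gt (j := ⟨j - 2, by omega⟩) (by dsimp only; omega) hj,
        ← Submodule.map_le_iff_le_comap, ← Submodule.map_comp, ← LinearMap.comp_assoc,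
        Submodule.map_comp, Submodule.map_comap_eq_of_surjective hτ]
      exact hW.map_le_of_le (by dsimp only; omega)
  map_le_gap {i j} hi hj := by
    rw [expandFlag_of_gt (j := ⟨j, by omega⟩) (by dsimp only; omega) (by omega),
      expandFlag_of_lt (j := ⟨j, by omega⟩) rfl (by omega), Submodule.map_comp,
      Submodule.map_comap_eq_of_surjective hτ]

theorem bijOn_collapseFlag [FiniteDimensional K F] (hγσ : γ ∘ₗ σ = LinearMap.id)
    (hτ : Function.Surjective τ) (hker : finrank K (LinearMap.ker τ) = 2) (hk0 : 1 ≤ k)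
    (hk : k < N) :
    Set.BijOn (collapseFlag γ τ hN)
      {V : {i : ℕ // i ≤ N ∧ i ≠ k} → Submodule K E | IsSpaltensteinFlag (σ ∘ₗ τ) V}
      {W | IsSpringerFlag (τ ∘ₗ σ) W} := by
  have hσ := LinearMap.injective_of_comp_eq_id _ _ hγσ
  exact Set.InvOn.bijOn (f' := expandFlag σ τ hk)
    ⟨fun _ hV => IsSpaltensteinFlag.expandFlag_collapseFlag hγσ hker.le hV hk0,
      fun _ _ => collapseFlag_expandFlag hγσ hτ⟩
    (fun _ hV => IsSpaltensteinFlag.isSpringerFlag_collapseFlag hγσ hker hV hk0 hk)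
    (fun _ hW => IsSpringerFlag.isSpaltensteinFlag_expandFlag hσ hτ hker hk0 hW)

end Flags

section Coordinates

variable {m n : ℕ}

theorem stdVec_succ (i : Fin (m + 2 * n)) : stdVec m n (i + 1) = Pi.single i 1 := by
  ext j
  simp [stdVec, Pi.single_apply, Fin.ext_iff]

theorem entry_eq (x : End ℂ (Fin (m + 2 * n) → ℂ)) {l i : Fin (m + 2 * n)} {p q : ℕ}
    (hl : l.val + 1 = p) (hi : i.val + 1 = q) : entry m n x p q = x (Pi.single i 1) l := by
  subst hl hi
  simp [entry, stdVec_succ, Pi.single_apply]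

theorem mem_span_stdVec_pair {a b : ℕ} {w : Fin (m + 2 * n) → ℂ} :
    w ∈ Submodule.span ℂ {stdVec m n a, stdVec m n b} ↔
      ∀ i : Fin (m + 2 * n), i.val + 1 ≠ a → i.val + 1 ≠ b → w i = 0 := by
  constructor
  · rintro hw i ha hb
    obtain ⟨c, d, rfl⟩ := Submodule.mem_span_pair.1 hw
    simp [stdVec, ha, hb]
  · intro hw
    rw [pi_eq_sum_univ' w]
    refine Submodule.sum_mem _ fun i _ => ?_
    by_cases hi : i.val + 1 = a ∨ i.val + 1 = b
    · rw [← stdVec_succ]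
      refine Submodule.smul_mem _ _ (Submodule.subset_span ?_)
      exact hi.imp (congrArg (stdVec m n)) (congrArg (stdVec m n))
    · rw [not_or] at hi
      rw [hw i hi.1 hi.2, zero_smul]
      exact Submodule.zero_mem _

theorem zn_apply {i j : Fin (m + 2 * n)} (hij : j.val = i + 1) (hj : j.val ≠ m + n)
    (v : Fin (m + 2 * n) → ℂ) : zn m n v i = v j := by
  have hrow : zMat m n i = Pi.single j 1 := by
    ext l
    simp only [zMat, Pi.single_apply, Fin.ext_iff]
    congr 1
    grind
  rw [zn, Matrix.toLin'_apply, Matrix.mulVec, hrow, single_one_dotProduct]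

theorem mem_slice'_iff {x : End ℂ (Fin (m + 2 * n) → ℂ)} :
    x ∈ slice' m n ↔
      ∀ i j : Fin (m + 2 * n), j.val = i + 1 → j.val ≠ m + n → ∀ v, x v i = v j := by
  constructor
  · intro hx i j hij hj v
    suffices h : LinearMap.proj i ∘ₗ x = LinearMap.proj j from LinearMap.congr_fun h v
    refine LinearMap.pi_ext' fun l => LinearMap.ext_ring ?_
    have hrow := mem_span_stdVec_pair.1 (hx (l + 1)) i (hij ▸ hj) (by omega)
    rw [stdVec_succ, Pi.sub_apply, sub_eq_zero, zn_apply hij hj] at hrow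
    exact hrow
  · intro hx q
    refine mem_span_stdVec_pair.2 fun i hi hi' => ?_
    let j : Fin (m + 2 * n) := ⟨i + 1, by omega⟩
    rw [Pi.sub_apply, sub_eq_zero, zn_apply (j := j) rfl hi, hx i j rfl hi]

theorem mem_MVslice_iff {x : End ℂ (Fin (m + 2 * n) → ℂ)} :
    x ∈ MVslice m n ↔ x ∈ slice' m n ∧
      (n ≠ 0 → ∀ i l : Fin (m + 2 * n), n ≤ i.val → i.val < m + n → l.val + 1 = m + 2 * n →
        x (Pi.single i 1) l = 0) := by
  refine and_congr_right fun _ => ⟨fun h hn i l hni hi hl => ?_, fun h q hnq hq hn => ?_⟩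
  · rw [← entry_eq x hl rfl]
    exact h _ (by omega) (by omega) hn
  · let i : Fin (m + 2 * n) := ⟨q - 1, by omega⟩
    let l : Fin (m + 2 * n) := ⟨m + 2 * n - 1, by omega⟩
    have hl : l.val + 1 = m + 2 * n := by dsimp only [l]; omega
    have hi : i.val + 1 = q := by dsimp only [i]; omega
    rw [entry_eq x hl hi]
    exact h hn i l (by omega) (by omega) hl

/-- The `0`-based index of the basis vector that `γ` sends to the one of index `i`; coordinate `i`
of `γ v` is coordinate `gamIdx i` of `v`. -/
def gamIdx (hn : 1 ≤ n) (i : Fin (m + 2 * (n - 1))) : Fin (m + 2 * n) :=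
  ⟨if i.val + 1 < m + n then i else i + 1, by split_ifs <;> omega⟩

/-- The `0`-based index of the basis vector that `τ = γ ∘ z_n` sends to the one of index `i`;
coordinate `i` of `τ v` is coordinate `tauIdx i` of `v`. -/
def tauIdx (hn : 1 ≤ n) (i : Fin (m + 2 * (n - 1))) : Fin (m + 2 * n) :=
  ⟨if i.val + 1 < m + n then i + 1 else i + 2, by split_ifs <;> omega⟩

theorem gamIdx_injective (hn : 1 ≤ n) : Function.Injective (gamIdx (m := m) hn) := by
  intro i j h
  simp only [gamIdx, Fin.ext_iff] at h ⊢
  grind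

theorem tauIdx_injective (hn : 1 ≤ n) : Function.Injective (tauIdx (m := m) hn) := by
  intro i j h
  simp only [tauIdx, Fin.ext_iff] at h ⊢
  grind

theorem tauIdx_eq_gamIdx_iff (hn : 1 ≤ n) {i j : Fin (m + 2 * (n - 1))} :
    tauIdx hn i = gamIdx hn j ↔ j.val = i + 1 ∧ j.val ≠ m + (n - 1) := by
  simp only [tauIdx, gamIdx, Fin.ext_iff]
  grind

theorem tauIdx_eq_gamIdx_add_one (hn : 1 ≤ n) (i : Fin (m + 2 * (n - 1))) :
    (tauIdx hn i).val = gamIdx hn i + 1 := by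
  simp only [tauIdx, gamIdx]
  grind

theorem tauIdx_ne (hn : 1 ≤ n) (i : Fin (m + 2 * (n - 1))) : (tauIdx hn i).val ≠ m + n := by
  simp only [tauIdx]
  grind

theorem exists_gamIdx_eq_and_tauIdx_eq (hn : 1 ≤ n) {i j : Fin (m + 2 * n)}
    (hij : j.val = i + 1) (hj : j.val ≠ m + n) :
    ∃ l, gamIdx hn l = i ∧ tauIdx hn l = j := by
  by_cases h : j.val < m + n
  · refine ⟨⟨i, by omega⟩, ?_⟩
    simp only [gamIdx, tauIdx, Fin.ext_iff]
    grind
  · refine ⟨⟨i - 1, by omega⟩, ?_⟩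
    simp only [gamIdx, tauIdx, Fin.ext_iff]
    grind

theorem exists_gamIdx_or_exists_tauIdx (hn : 1 ≤ n) (i : Fin (m + 2 * (n - 1)))
    (l : Fin (m + 2 * n)) :
    (∃ j, gamIdx hn j = l) ∨ (∃ j, tauIdx hn j = l) ∨ n = 1 ∧ l.val + 1 = m + 2 * n := by
  have hi := i.isLt
  by_cases hlast : l.val + 1 = m + 2 * n
  · by_cases hn1 : n = 1
    · exact .inr (.inr ⟨hn1, hlast⟩)
    · refine .inr (.inl ⟨⟨l - 2, by omega⟩, Fin.ext ?_⟩)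
      simp only [tauIdx]
      grind
  by_cases hmid : l.val + 1 = m + n
  · refine .inr (.inl ⟨⟨l - 1, by omega⟩, Fin.ext ?_⟩)
    simp only [tauIdx]
    grind
  · let l' : Fin (m + 2 * n) := ⟨l + 1, by omega⟩
    obtain ⟨j, hj, -⟩ := exists_gamIdx_eq_and_tauIdx_eq hn (j := l') rfl hmid
    exact .inl ⟨j, hj⟩

theorem gam_eq_funLeft (hn : 1 ≤ n) : gam m n = LinearMap.funLeft ℂ ℂ (gamIdx hn) := by
  refine LinearMap.ext fun v => funext fun i => ?_
  have hrow : gamMat m n i = Pi.single (gamIdx hn i) 1 := by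
    ext j
    simp only [gamMat, gamIdx, Pi.single_apply, Fin.ext_iff]
    congr 1
    grind
  rw [gam, Matrix.toLin'_apply, Matrix.mulVec, hrow, single_one_dotProduct,
    LinearMap.funLeft_apply]

/-- The map `τ = γ ∘ z_n`; it is `γ ∘ x` for every `x ∈ S_n'`. -/
def tau (m n : ℕ) : (Fin (m + 2 * n) → ℂ) →ₗ[ℂ] (Fin (m + 2 * (n - 1)) → ℂ) :=
  gam m n ∘ₗ zn m n

theorem tau_eq_funLeft (hn : 1 ≤ n) : tau m n = LinearMap.funLeft ℂ ℂ (tauIdx hn) :=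
  LinearMap.ext fun v => funext fun i => by
    rw [tau, gam_eq_funLeft hn, LinearMap.comp_apply, LinearMap.funLeft_apply,
      LinearMap.funLeft_apply, zn_apply (tauIdx_eq_gamIdx_add_one hn i) (tauIdx_ne hn i)]

theorem tau_surjective (hn : 1 ≤ n) : Function.Surjective (tau m n) := by
  rw [tau_eq_funLeft hn]
  exact LinearMap.funLeft_surjective_of_injective ℂ ℂ _ (tauIdx_injective hn)

theorem finrank_ker_tau (hn : 1 ≤ n) : finrank ℂ (LinearMap.ker (tau m n)) = 2 := by
  have hrank := (tau m n).finrank_range_add_finrank_ker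
  rw [LinearMap.range_eq_top.2 (tau_surjective hn), finrank_top, finrank_fin_fun,
    finrank_fin_fun] at hrank
  omega

theorem mem_slice'_iff_gam_comp (hn : 1 ≤ n) {x : End ℂ (Fin (m + 2 * n) → ℂ)} :
    x ∈ slice' m n ↔ gam m n ∘ₗ x = tau m n := by
  rw [mem_slice'_iff, gam_eq_funLeft hn, tau_eq_funLeft hn]
  constructor
  · intro hx
    refine LinearMap.ext fun v => funext fun i => ?_
    exact hx _ _ (tauIdx_eq_gamIdx_add_one hn i) (tauIdx_ne hn i) v
  · intro hx i j hij hj v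
    obtain ⟨l, rfl, rfl⟩ := exists_gamIdx_eq_and_tauIdx_eq hn hij hj
    exact congrFun (LinearMap.congr_fun hx v) l

theorem ker_le_ker_tau (hn : 1 ≤ n) {x : End ℂ (Fin (m + 2 * n) → ℂ)} (hx : x ∈ slice' m n) :
    LinearMap.ker x ≤ LinearMap.ker (tau m n) :=
  (mem_slice'_iff_gam_comp hn).1 hx ▸ LinearMap.ker_le_ker_comp _ _

theorem mem_slice'_pred_iff (hn : 1 ≤ n) {y : End ℂ (Fin (m + 2 * (n - 1)) → ℂ)} :
    y ∈ slice' m (n - 1) ↔ ∀ i j, tauIdx hn i = gamIdx hn j → ∀ v, y v i = v j := by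
  simp only [mem_slice'_iff, tauIdx_eq_gamIdx_iff, and_imp]

end Coordinates

section SliceSections

variable {m n : ℕ}

/-- The sections `σ` of `γ` whose row `m + 2n` vanishes in the columns `n, …, m + n - 1`, rows and
columns being numbered from `1`. They correspond to the endomorphisms in `S_n` with two-dimensional
kernel by `σ ↦ σ ∘ τ`, and to `S_{n-1}` by `σ ↦ τ ∘ σ`. -/
def sliceSections (m n : ℕ) :
    Set ((Fin (m + 2 * (n - 1)) → ℂ) →ₗ[ℂ] (Fin (m + 2 * n) → ℂ)) :=
  {σ | gam m n ∘ₗ σ = LinearMap.id ∧ ∀ i l, n ≤ i.val + 1 → i.val + 1 < m + n →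
    l.val + 1 = m + 2 * n → σ (Pi.single i 1) l = 0}

theorem comp_tau_mem_MVslice_iff (hn : 1 ≤ n)
    {σ : (Fin (m + 2 * (n - 1)) → ℂ) →ₗ[ℂ] (Fin (m + 2 * n) → ℂ)}
    (hσ : gam m n ∘ₗ σ = LinearMap.id) :
    σ ∘ₗ tau m n ∈ MVslice m n ↔ σ ∈ sliceSections m n := by
  have hslice : σ ∘ₗ tau m n ∈ slice' m n := by
    rw [mem_slice'_iff_gam_comp hn, ← LinearMap.comp_assoc, hσ, LinearMap.id_comp]
  have htau (i) : tau m n (Pi.single (tauIdx hn i) 1) = Pi.single i 1 := by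
    ext j
    simp [tau_eq_funLeft hn, Pi.single_apply, (tauIdx_injective hn).eq_iff]
  simp only [mem_MVslice_iff, sliceSections, Set.mem_ofPred_eq, hslice, hσ, true_and]
  constructor
  · intro h i l hni hi hl
    have hval : (tauIdx hn i).val = i + 1 := by simp [tauIdx, hi]
    have hentry := h (by omega) (tauIdx hn i) l (by omega) (by omega) hl
    rwa [LinearMap.comp_apply, htau] at hentry
  · intro h _ i l hni hi hl
    have hval : i = tauIdx hn ⟨i - 1, by omega⟩ := by
      simp only [tauIdx, Fin.ext_iff]
      grind
    rw [hval, LinearMap.comp_apply, htau]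
    exact h _ l (by dsimp only; omega) (by dsimp only; omega) hl

theorem tau_comp_mem_MVslice (hn : 1 ≤ n)
    {σ : (Fin (m + 2 * (n - 1)) → ℂ) →ₗ[ℂ] (Fin (m + 2 * n) → ℂ)}
    (hσ : σ ∈ sliceSections m n) : tau m n ∘ₗ σ ∈ MVslice m (n - 1) := by
  refine mem_MVslice_iff.2 ⟨(mem_slice'_pred_iff hn).2 fun i j hij v => ?_,
    fun hn1 i l hni hi hl => ?_⟩
  · have hγ := congrFun (LinearMap.congr_fun hσ.1 v) j
    rw [gam_eq_funLeft hn] at hγ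
    rw [tau_eq_funLeft hn, LinearMap.comp_apply, LinearMap.funLeft_apply, hij]
    exact hγ
  · rw [tau_eq_funLeft hn]
    refine hσ.2 i (tauIdx hn l) (by omega) (by omega) ?_
    simp only [tauIdx]
    grind

/-- The map `σ` with `γ (σ v) = v` and `τ (σ v) = y v`, for `y ∈ S_{n-1}`. If `n = 1`
its row `m + 2n` is determined by neither condition and is set to zero. -/
def sectionOf (hn : 1 ≤ n) (y : End ℂ (Fin (m + 2 * (n - 1)) → ℂ)) :
    (Fin (m + 2 * (n - 1)) → ℂ) →ₗ[ℂ] (Fin (m + 2 * n) → ℂ) where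
  toFun v := Function.extend (gamIdx hn) v (Function.extend (tauIdx hn) (y v) 0)
  map_add' v w := by rw [map_add, ← Function.extend_add, ← Function.extend_add, add_zero]
  map_smul' c v := by
    rw [map_smul, RingHom.id_apply, ← Function.extend_smul, ← Function.extend_smul, smul_zero]

theorem gam_comp_sectionOf (hn : 1 ≤ n) (y : End ℂ (Fin (m + 2 * (n - 1)) → ℂ)) :
    gam m n ∘ₗ sectionOf hn y = LinearMap.id := by
  rw [gam_eq_funLeft hn]
  exact LinearMap.ext fun v => funext fun i => (gamIdx_injective hn).extend_apply ..

theorem tau_comp_sectionOf (hn : 1 ≤ n) {y : End ℂ (Fin (m + 2 * (n - 1)) → ℂ)}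
    (hy : y ∈ slice' m (n - 1)) : tau m n ∘ₗ sectionOf hn y = y := by
  rw [tau_eq_funLeft hn]
  refine LinearMap.ext fun v => funext fun i => ?_
  change Function.extend (gamIdx hn) v (Function.extend (tauIdx hn) (y v) 0) (tauIdx hn i) = y v i
  by_cases h : ∃ j, gamIdx hn j = tauIdx hn i
  · obtain ⟨j, hj⟩ := h
    rw [← hj, (gamIdx_injective hn).extend_apply]
    exact ((mem_slice'_pred_iff hn).1 hy i j hj.symm v).symm
  · rw [Function.extend_apply' _ _ _ h, (tauIdx_injective hn).extend_apply]

theorem sectionOf_mem_sliceSections (hn : 1 ≤ n) {y : End ℂ (Fin (m + 2 * (n - 1)) → ℂ)}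
    (hy : y ∈ MVslice m (n - 1)) : sectionOf hn y ∈ sliceSections m n := by
  refine ⟨gam_comp_sectionOf hn y, fun i l hni hi hl => ?_⟩
  by_cases hn1 : n = 1
  · have hγ : ¬∃ j, gamIdx hn j = l := by
      simp only [gamIdx, Fin.ext_iff]
      grind
    have hτ : ¬∃ j, tauIdx hn j = l := by
      simp only [tauIdx, Fin.ext_iff]
      grind
    exact (Function.extend_apply' _ _ _ hγ).trans (Function.extend_apply' _ _ _ hτ)
  · have hval : l = tauIdx hn ⟨l - 2, by omega⟩ := by
      simp only [tauIdx, Fin.ext_iff]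
      grind
    have hentry := (mem_MVslice_iff.1 hy).2 (by omega) i ⟨l - 2, by omega⟩ (by omega) (by omega)
      (by dsimp only; omega)
    rw [← tau_comp_sectionOf hn hy.1, tau_eq_funLeft hn] at hentry
    rw [hval]
    exact hentry

theorem injOn_tau_comp (hn : 1 ≤ n) : (sliceSections m n).InjOn fun σ => tau m n ∘ₗ σ := by
  intro σ hσ σ' hσ' hτ
  have hγ : gam m n ∘ₗ σ = gam m n ∘ₗ σ' := hσ.1.trans hσ'.1.symm
  simp only [tau_eq_funLeft hn, gam_eq_funLeft hn] at hτ hγ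
  refine LinearMap.pi_ext' fun i => LinearMap.ext_ring (funext fun l => ?_)
  rcases exists_gamIdx_or_exists_tauIdx hn i l with ⟨j, rfl⟩ | ⟨j, rfl⟩ | ⟨hn1, hl⟩
  · exact congrFun (LinearMap.congr_fun hγ (Pi.single i 1)) j
  · exact congrFun (LinearMap.congr_fun hτ (Pi.single i 1)) j
  · exact (hσ.2 i l (by omega) (by omega) hl).trans (hσ'.2 i l (by omega) (by omega) hl).symm

theorem bijOn_tau_comp (hn : 1 ≤ n) :
    Set.BijOn (fun σ => tau m n ∘ₗ σ) (sliceSections m n) (MVslice m (n - 1)) :=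
  ⟨fun _ => tau_comp_mem_MVslice hn, injOn_tau_comp hn, fun y hy =>
    ⟨sectionOf hn y, sectionOf_mem_sliceSections hn hy, tau_comp_sectionOf hn hy.1⟩⟩

theorem exists_mem_sliceSections (hn : 1 ≤ n) {x : End ℂ (Fin (m + 2 * n) → ℂ)}
    (hx : x ∈ MVslice m n) (hker : finrank ℂ (LinearMap.ker x) = 2) :
    ∃ σ ∈ sliceSections m n, σ ∘ₗ tau m n = x := by
  have hγx := (mem_slice'_iff_gam_comp hn).1 hx.1
  have heq := Submodule.eq_of_le_of_finrank_eq (ker_le_ker_tau hn hx.1)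
    (hker.trans (finrank_ker_tau hn).symm)
  obtain ⟨σ, rfl⟩ := exists_comp_eq_of_ker_le (tau_surjective hn) heq.ge
  have hσ : gam m n ∘ₗ σ = LinearMap.id := by
    rwa [← LinearMap.cancel_right (tau_surjective hn), LinearMap.comp_assoc, LinearMap.id_comp]
  exact ⟨σ, (comp_tau_mem_MVslice_iff hn hσ).1 hx, rfl⟩

theorem Phi_comp_tau (hn : 1 ≤ n)
    {σ : (Fin (m + 2 * (n - 1)) → ℂ) →ₗ[ℂ] (Fin (m + 2 * n) → ℂ)}
    (hσ : gam m n ∘ₗ σ = LinearMap.id) : Phi m n (σ ∘ₗ tau m n) = tau m n ∘ₗ σ := by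
  have hγ (v) : gam m n (σ v) = v := LinearMap.congr_fun hσ v
  have hrange (v) : σ v ∈ LinearMap.range (σ ∘ₗ tau m n) := by
    obtain ⟨w, rfl⟩ := tau_surjective hn v
    exact ⟨w, rfl⟩
  have hbij : Function.Bijective
      ((gam m n).domRestrict (LinearMap.range (σ ∘ₗ tau m n))) := by
    refine Function.bijective_iff_has_inverse.2 ⟨fun v => ⟨σ v, hrange v⟩, ?_, hγ⟩
    rintro ⟨_, w, rfl⟩
    exact Subtype.ext (congrArg σ (hγ (tau m n w)))
  rw [Phi, dif_pos hbij]
  refine LinearMap.ext fun v => ?_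
  have hsymm : (LinearEquiv.ofBijective _ hbij).symm v = ⟨σ v, hrange v⟩ :=
    (LinearEquiv.symm_apply_eq _).2 (hγ v).symm
  simp only [LinearMap.comp_apply, LinearEquiv.coe_coe, hsymm, Submodule.subtype_apply, hγ]

end SliceSections

section Correspondence

variable {m n k : ℕ}

theorem mem_SetA_iff_isSpaltensteinFlag (hk0 : 1 ≤ k)
    {V : flagIdxA m n k → Submodule ℂ (Fin (m + 2 * n) → ℂ)}
    {x : End ℂ (Fin (m + 2 * n) → ℂ)} :
    (V, x) ∈ SetA m n k ↔ x ∈ MVslice m n ∧ IsSpaltensteinFlag x V := by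
  refine and_congr_right fun _ => ⟨fun ⟨hdim, _, _, hmono, hgap, hmap⟩ => ?_, fun hV => ?_⟩
  · exact ⟨hdim, fun _ _ => hmono _ _, fun hij => Submodule.map_le_iff_le_comap.2 (hmap _ _ hij),
      fun hi hj => Submodule.map_le_iff_le_comap.2 (hgap _ _ hi (by omega))⟩
  · refine ⟨hV.finrank_eq, fun i hi => ?_, fun i hi => ?_, fun _ _ hij => hV.monotone hij,
      fun _ _ hi hj => Submodule.map_le_iff_le_comap.1 (hV.map_le_gap hi (by omega)),
      fun _ _ hij => Submodule.map_le_iff_le_comap.1 (hV.map_le hij)⟩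
    · exact Submodule.finrank_eq_zero.1 ((hV.finrank_eq i).trans hi)
    · exact Submodule.eq_top_of_finrank_eq (by rw [hV.finrank_eq, hi, finrank_fin_fun])

theorem mem_SetB_iff_isSpringerFlag (hn : 1 ≤ n)
    {W : flagIdxB m n → Submodule ℂ (Fin (m + 2 * (n - 1)) → ℂ)}
    {y : End ℂ (Fin (m + 2 * (n - 1)) → ℂ)} :
    (W, y) ∈ SetB m n ↔ y ∈ MVslice m (n - 1) ∧ IsSpringerFlag y W := by
  refine and_congr_right fun _ => ⟨fun ⟨hdim, _, _, hmono, hmap⟩ => ?_, fun hW => ?_⟩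
  · exact ⟨hdim, fun _ _ => hmono _ _, fun hij => Submodule.map_le_iff_le_comap.2 (hmap _ _ hij)⟩
  · refine ⟨hW.finrank_eq, fun j hj => ?_, fun j hj => ?_, fun _ _ hij => hW.monotone hij,
      fun _ _ hij => Submodule.map_le_iff_le_comap.1 (hW.map_le hij)⟩
    · exact Submodule.finrank_eq_zero.1 ((hW.finrank_eq j).trans hj)
    · refine Submodule.eq_top_of_finrank_eq ?_
      rw [hW.finrank_eq, hj, finrank_fin_fun]
      omega

theorem mem_SetA_iff (hn : 1 ≤ n) (hk0 : 1 ≤ k) (hk : k < m + 2 * n)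
    {V : flagIdxA m n k → Submodule ℂ (Fin (m + 2 * n) → ℂ)}
    {x : End ℂ (Fin (m + 2 * n) → ℂ)} :
    (V, x) ∈ SetA m n k ↔
      ∃ σ ∈ sliceSections m n, σ ∘ₗ tau m n = x ∧ IsSpaltensteinFlag (σ ∘ₗ tau m n) V := by
  rw [mem_SetA_iff_isSpaltensteinFlag hk0]
  constructor
  · rintro ⟨hx, hV⟩
    have hker : finrank ℂ (LinearMap.ker x) ≤ 2 :=
      (Submodule.finrank_mono (ker_le_ker_tau hn hx.1)).trans (finrank_ker_tau hn).le
    obtain ⟨σ, hσ, rfl⟩ := exists_mem_sliceSections hn hx (hV.finrank_ker hker hk0 hk)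
    exact ⟨σ, hσ, rfl, hV⟩
  · rintro ⟨σ, hσ, rfl, hV⟩
    exact ⟨(comp_tau_mem_MVslice_iff hn hσ.1).2 hσ, hV⟩

theorem mem_SetB_iff (hn : 1 ≤ n) {W : flagIdxB m n → Submodule ℂ (Fin (m + 2 * (n - 1)) → ℂ)}
    {y : End ℂ (Fin (m + 2 * (n - 1)) → ℂ)} :
    (W, y) ∈ SetB m n ↔
      ∃ σ ∈ sliceSections m n, tau m n ∘ₗ σ = y ∧ IsSpringerFlag (tau m n ∘ₗ σ) W := by
  rw [mem_SetB_iff_isSpringerFlag hn, ← (bijOn_tau_comp hn).image_eq]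
  constructor
  · rintro ⟨⟨σ, hσ, rfl⟩, hW⟩
    exact ⟨σ, hσ, rfl, hW⟩
  · rintro ⟨σ, hσ, rfl, hW⟩
    exact ⟨⟨σ, hσ, rfl⟩, hW⟩

theorem alphaMap_eq (hn : 1 ≤ n) (hk0 : 1 ≤ k) (hN : 2 ≤ m + 2 * n)
    {σ : (Fin (m + 2 * (n - 1)) → ℂ) →ₗ[ℂ] (Fin (m + 2 * n) → ℂ)}
    (hσ : gam m n ∘ₗ σ = LinearMap.id)
    (V : flagIdxA m n k → Submodule ℂ (Fin (m + 2 * n) → ℂ)) :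
    alphaMap m n k hn hk0 (V, σ ∘ₗ tau m n) =
      (collapseFlag (gam m n) (tau m n) hN V, tau m n ∘ₗ σ) := by
  refine Prod.ext (funext fun j => ?_) (Phi_comp_tau hn hσ)
  simp only [alphaMap, collapseFlag, ← Submodule.map_comp, ← LinearMap.comp_assoc, hσ,
    LinearMap.id_comp]
  split_ifs <;> first | rfl | omega

end Correspondence

/-- The map `α : ((V_i), x) ↦ ((W_j), Φ(x))` is a well-defined bijection
from `A` onto `B` (Proposition 2.3 of the paper). -/
theorem alphaMap_bijOn (m n k : ℕ) (hn : 1 ≤ n) (hk1 : 1 ≤ k) (hk2 : k ≤ m + 2*n - 1) :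
    Set.BijOn (alphaMap m n k hn hk1) (SetA m n k) (SetB m n) := by
  have hN : 2 ≤ m + 2 * n := by omega
  have hk : k < m + 2 * n := by omega
  have hflags {σ} (hσ : σ ∈ sliceSections m n) := bijOn_collapseFlag (k := k) (hN := hN) hσ.1
    (tau_surjective hn) (finrank_ker_tau hn) hk1 hk
  refine ⟨?mapsTo, ?injOn, ?surjOn⟩
  case mapsTo =>
    rintro ⟨V, x⟩ hVx
    obtain ⟨σ, hσ, rfl, hV⟩ := (mem_SetA_iff hn hk1 hk).1 hVx
    rw [alphaMap_eq hn hk1 hN hσ.1]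
    exact (mem_SetB_iff hn).2 ⟨σ, hσ, rfl, (hflags hσ).mapsTo hV⟩
  case injOn =>
    rintro ⟨V, x⟩ hVx ⟨V', x'⟩ hVx' heq
    obtain ⟨σ, hσ, rfl, hV⟩ := (mem_SetA_iff hn hk1 hk).1 hVx
    obtain ⟨σ', hσ', rfl, hV'⟩ := (mem_SetA_iff hn hk1 hk).1 hVx'
    rw [alphaMap_eq hn hk1 hN hσ.1, alphaMap_eq hn hk1 hN hσ'.1, Prod.mk.injEq] at heq
    obtain rfl := (bijOn_tau_comp hn).injOn hσ hσ' heq.2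
    rw [(hflags hσ).injOn hV hV' heq.1]
  case surjOn =>
    rintro ⟨W, y⟩ hWy
    obtain ⟨σ, hσ, rfl, hW⟩ := (mem_SetB_iff hn).1 hWy
    obtain ⟨V, hV, rfl⟩ := (hflags hσ).surjOn hW
    exact ⟨_, (mem_SetA_iff hn hk1 hk).2 ⟨σ, hσ, rfl, hV⟩, alphaMap_eq hn hk1 hN hσ.1 V⟩
end
end

section
/- If x ∈ S_n' is nilpotent, then for every 1 ≤ p ≤ m+2n the matrix entries (x^{n+1})_{m+n, p} and (x^{m+n+1})_{m+2n, p} vanish. (Vanishing of entries of powers from the proof of Lemma 2.5 of the paper.) -/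
open Module BigOperators

noncomputable section

/-!
Let `e_i` be the coordinate functional dual to `u_i`. Row `i` of `x ∈ S_n'` is that of `z_n` unless
`i` is `m + n` or `m + 2n`, so `e_i ∘ x = e_{i+1}` for every other `i`. Hence
`e_{m+n} = e_1 ∘ x^(m+n-1)` and `e_{m+2n} = e_{m+n+1} ∘ x^(n-1)`. Composing with `x^(n+1)` and
`x^(m+n+1)` respectively produces the factor `x^(m+2n)`, which vanishes because a nilpotent
endomorphism of a space of dimension `N` satisfies `x^N = 0`.
-/

section FunctionalChain

theorem comp_pow_sub_eq_of_comp_eq_succ {R M P : Type*} [Semiring R] [AddCommMonoid M] [Module R M]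
    [AddCommMonoid P] [Module R P] {f : ℕ → M →ₗ[R] P} {x : Module.End R M} {a b : ℕ}
    (hab : a ≤ b) (hf : ∀ i, a ≤ i → i < b → f i ∘ₗ x = f (i + 1)) :
    f a ∘ₗ x ^ (b - a) = f b := by
  induction b, hab using Nat.le_induction with
  | base => simp [Module.End.one_eq_id]
  | succ b hab ih =>
    calc f a ∘ₗ x ^ (b + 1 - a)
        = (f a ∘ₗ x ^ (b - a)) ∘ₗ x := by
          rw [Nat.sub_add_comm hab, pow_succ, Module.End.mul_eq_comp, LinearMap.comp_assoc]
      _ = f b ∘ₗ x := by rw [ih fun i hai hib => hf i hai (hib.trans b.lt_succ_self)]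
      _ = f (b + 1) := hf b hab b.lt_succ_self

variable {R M P : Type*} [CommRing R] [IsDomain R] [AddCommGroup M] [Module R M]
  [Module.Finite R M] [Module.Free R M] [AddCommMonoid P] [Module R P]

theorem pow_finrank_eq_zero_of_isNilpotent {x : Module.End R M} (hx : IsNilpotent x) :
    x ^ finrank R M = 0 := by
  simpa only [hx.charpoly_eq_X_pow_finrank, map_pow, Polynomial.aeval_X]
    using LinearMap.aeval_self_charpoly x

theorem comp_pow_eq_zero_of_comp_eq_succ {f : ℕ → M →ₗ[R] P} {x : Module.End R M}
    (hx : IsNilpotent x) {a b l : ℕ} (hab : a ≤ b)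
    (hf : ∀ i, a ≤ i → i < b → f i ∘ₗ x = f (i + 1)) (hl : finrank R M + a ≤ b + l) :
    f b ∘ₗ x ^ l = 0 := by
  have hpow : x ^ (b - a + l) = 0 :=
    pow_eq_zero_of_le (by lia) (pow_finrank_eq_zero_of_isNilpotent hx)
  rw [← comp_pow_sub_eq_of_comp_eq_succ hab hf, LinearMap.comp_assoc, ← Module.End.mul_eq_comp,
    ← pow_add, hpow, LinearMap.comp_zero]

end FunctionalChain

section Slice

open scoped Matrix

variable {m n : ℕ}

theorem stdVec_succ_eq_single (j : Fin (m + 2 * n)) : stdVec m n (j + 1) = Pi.single j 1 := by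
  ext i
  simp only [stdVec, Pi.single_apply, Nat.add_right_cancel_iff, Fin.ext_iff]

theorem stdVec_eq_zero_of_lt {k : ℕ} (hk : m + 2 * n < k) : stdVec m n k = 0 :=
  funext fun i => if_neg (by lia)

theorem stdVec_dotProduct_stdVec_of_ne {i k : ℕ} (hik : i ≠ k) :
    stdVec m n i ⬝ᵥ stdVec m n k = 0 :=
  Finset.sum_eq_zero fun j _ => by grind [stdVec]

theorem stdVec_vecMul_zMat {i : ℕ} (hi : 1 ≤ i) (hmn : i ≠ m + n) :
    stdVec m n i ᵥ* zMat m n = stdVec m n (i + 1) := by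
  obtain ⟨k, rfl⟩ := Nat.exists_eq_add_of_le' hi
  by_cases hk : k < m + 2 * n
  · rw [stdVec_succ_eq_single ⟨k, hk⟩, Matrix.single_one_vecMul]
    ext j
    simp only [Matrix.row_apply, zMat, stdVec]
    exact if_congr (by lia) rfl rfl
  · rw [stdVec_eq_zero_of_lt (by lia), stdVec_eq_zero_of_lt (by lia), Matrix.zero_vecMul]

variable (m n) in
/-- The coordinate functional `e_k` dual to `u_k`, indexed `1`-based; like `stdVec m n k`, it is
zero if `k` is out of the range `1, …, m+2n`. -/
def stdCoord (k : ℕ) : Dual ℂ (Fin (m + 2 * n) → ℂ) :=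
  dotProductEquiv ℂ _ (stdVec m n k)

theorem entry_eq_stdCoord (x : Module.End ℂ (Fin (m + 2 * n) → ℂ)) (p q : ℕ) :
    entry m n x p q = stdCoord m n p (x (stdVec m n q)) :=
  rfl

theorem stdCoord_comp_zn {i : ℕ} (hi : 1 ≤ i) (hmn : i ≠ m + n) :
    stdCoord m n i ∘ₗ zn m n = stdCoord m n (i + 1) := by
  refine LinearMap.ext fun v => ?_
  calc stdVec m n i ⬝ᵥ (zMat m n *ᵥ v)
      = (stdVec m n i ᵥ* zMat m n) ⬝ᵥ v := Matrix.dotProduct_mulVec _ _ _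
    _ = stdVec m n (i + 1) ⬝ᵥ v := by rw [stdVec_vecMul_zMat hi hmn]

theorem stdCoord_eq_zero_of_mem_span {i : ℕ} (hmn : i ≠ m + n) (hm2n : i ≠ m + 2 * n)
    {v : Fin (m + 2 * n) → ℂ}
    (hv : v ∈ Submodule.span ℂ {stdVec m n (m + n), stdVec m n (m + 2 * n)}) :
    stdCoord m n i v = 0 := by
  obtain ⟨a, b, rfl⟩ := Submodule.mem_span_pair.1 hv
  simp [stdCoord, stdVec_dotProduct_stdVec_of_ne hmn, stdVec_dotProduct_stdVec_of_ne hm2n]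

theorem stdCoord_comp_of_mem_slice' {x : Module.End ℂ (Fin (m + 2 * n) → ℂ)} (hx : x ∈ slice' m n)
    {i : ℕ} (hi : 1 ≤ i) (hmn : i ≠ m + n) (hm2n : i ≠ m + 2 * n) :
    stdCoord m n i ∘ₗ x = stdCoord m n (i + 1) := by
  rw [← stdCoord_comp_zn hi hmn]
  refine LinearMap.pi_ext' fun j => LinearMap.ext_ring ?_
  have hdiff := stdCoord_eq_zero_of_mem_span hmn hm2n (hx (j + 1))
  rw [map_sub, sub_eq_zero, stdVec_succ_eq_single] at hdiff
  exact hdiff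

theorem stdCoord_comp_pow_eq_zero_of_mem_slice' {x : Module.End ℂ (Fin (m + 2 * n) → ℂ)}
    (hx : x ∈ slice' m n) (hnil : IsNilpotent x) {a b l : ℕ} (ha : 1 ≤ a) (hab : a ≤ b)
    (hb : b ≤ m + 2 * n) (hmn : b ≤ m + n ∨ m + n < a) (hl : m + 2 * n + a ≤ b + l) :
    stdCoord m n b ∘ₗ x ^ l = 0 := by
  refine comp_pow_eq_zero_of_comp_eq_succ hnil hab (fun i hai hib => ?_) (by simpa using hl)
  exact stdCoord_comp_of_mem_slice' hx (by lia) (by lia) (by lia)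

end Slice

/-- If `x ∈ S_n'` is nilpotent, then for every `1 ≤ p ≤ m+2n` the
matrix entries `(x^(n+1))_{m+n, p}` and `(x^(m+n+1))_{m+2n, p}` vanish. -/
theorem slice'_nilpotent_power_entries_vanish (m n : ℕ) (hn : 1 ≤ n)
    (x : Module.End ℂ (Fin (m + 2*n) → ℂ)) (hx : x ∈ slice' m n)
    (hnil : IsNilpotent x) :
    ∀ p : ℕ, 1 ≤ p → p ≤ m + 2*n →
      entry m n (x ^ (n + 1)) (m + n) p = 0 ∧
      entry m n (x ^ (m + n + 1)) (m + 2*n) p = 0 := by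
  intro p _ _
  have hmn : stdCoord m n (m + n) ∘ₗ x ^ (n + 1) = 0 :=
    stdCoord_comp_pow_eq_zero_of_mem_slice' hx hnil (a := 1)
      (by lia) (by lia) (by lia) (by lia) (by lia)
  have hm2n : stdCoord m n (m + 2 * n) ∘ₗ x ^ (m + n + 1) = 0 :=
    stdCoord_comp_pow_eq_zero_of_mem_slice' hx hnil (a := m + n + 1)
      (by lia) (by lia) (by lia) (by lia) (by lia)
  rw [entry_eq_stdCoord, entry_eq_stdCoord]
  exact ⟨LinearMap.congr_fun hmn _, LinearMap.congr_fun hm2n _⟩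
end
end
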